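/- Let p be a prime with p ≡ 1 (mod 4). Then Σ_{k=0}^{(p−1)/4} (−1)^k (1/4)_k^3 / k!^3 ≡ (−1)^{(p−1)/4} · p · Σ_{k=0}^{(p−1)/4} (1/4)_k^2 (1/2)_k / (k! (5/8)_k (9/8)_k) (mod p^2). -/

import Mathlib

open Finset

/-- The Pochhammer symbol `(a)_k = a(a+1)⋯(a+k-1)` for rational `a`. -/
def poch (a : ℚ) (k : ℕ) : ℚ := ∏ j ∈ Finset.range k, (a + j)

lemma poch_zero (a : ℚ) : poch a 0 = 1 := by simp [poch]

lemma poch_succ (a : ℚ) (k : ℕ) : poch a (k+1) = poch a k * (a + k) := by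
  simp [poch, Finset.prod_range_succ]

lemma poch_succ' (a : ℚ) (k : ℕ) : poch a (k+1) = a * poch (a+1) k := by
  unfold poch
  rw [Finset.prod_range_succ', mul_comm]
  simp only [Nat.cast_zero, add_zero]
  congr 1
  apply Finset.prod_congr rfl
  intro i _
  push_cast
  ring

lemma poch_add (a : ℚ) (k m : ℕ) : poch a (k+m) = poch a k * poch (a+k) m := by
  induction m with
  | zero => simp [poch_zero]
  | succ m ih => rw [← add_assoc, poch_succ, ih, poch_succ]; push_cast; ring

lemma poch_ne (a : ℚ) (k : ℕ) (h : ∀ j : ℕ, a + j ≠ 0) : poch a k ≠ 0 :=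
  Finset.prod_ne_zero_iff.mpr fun j _ => h j

lemma poch_pos (a : ℚ) (k : ℕ) (h : 0 < a) : poch a k ≠ 0 :=
  poch_ne a k fun j => by positivity

/-- Chu-Vandermonde, polynomial form. -/
lemma cv_poly (m : ℕ) : ∀ b c : ℚ,
    ∑ i ∈ range (m+1), (m.choose i : ℚ) * ((-1)^i * poch b i * poch (c+i) (m-i))
      = poch (c-b) m := by
  induction m with
  | zero => intro b c; simp [poch_zero]
  | succ m ih =>
    intro b c
    rw [Finset.sum_range_succ']
    have h1 : ∀ i ∈ range (m+1), ((m+1).choose (i+1) : ℚ) *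
        ((-1)^(i+1) * poch b (i+1) * poch (c+(i+1 : ℕ)) (m+1-(i+1)))
        = (-b) * ((m.choose i : ℚ) * ((-1)^i * poch (b+1) i * poch ((c+1)+i) (m-i)))
        + (m.choose (i+1) : ℚ) *
        ((-1)^(i+1) * poch b (i+1) * poch (c+(i+1 : ℕ)) (m+1-(i+1))) := by
      intro i _
      rw [Nat.choose_succ_succ]
      have e : m + 1 - (i+1) = m - i := by omega
      have e2 : c + ((i+1 : ℕ) : ℚ) = c + 1 + i := by push_cast; ring
      rw [e, e2, poch_succ' b]
      push_cast
      ring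
    rw [Finset.sum_congr rfl h1, Finset.sum_add_distrib, ← Finset.mul_sum, ih]
    have h2 := Finset.sum_range_succ' (fun i => (m.choose i : ℚ) *
        ((-1)^i * poch b i * poch (c+(i : ℕ)) (m+1-i))) (m+1)
    rw [Finset.sum_range_succ] at h2
    simp only [Nat.choose_succ_self, Nat.cast_zero, zero_mul, add_zero] at h2
    have h3 : ∑ i ∈ range (m+1), (m.choose i : ℚ) *
        ((-1)^i * poch b i * poch (c+(i : ℕ)) (m+1-i)) = (c+m) * poch (c-b) m := by
      rw [← ih b c, Finset.mul_sum]
      apply Finset.sum_congr rfl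
      intro i hi
      have hi' : i ≤ m := by simpa [Nat.lt_succ_iff] using hi
      have e : m + 1 - i = (m - i) + 1 := by omega
      rw [e, poch_succ, Nat.cast_sub hi']
      ring
    rw [h3] at h2
    have e : c + 1 - (b+1) = c - b := by ring
    rw [e, poch_succ]
    simp only [Nat.choose_zero_right, Nat.cast_zero, add_zero] at h2 ⊢
    linear_combination -h2

/-- Fraction form. -/
lemma cv (m : ℕ) (b c : ℚ) (hc : 0 < c) :
    ∑ i ∈ range (m+1), (m.choose i : ℚ) * ((-1)^i * poch b i / poch c i)
      = poch (c-b) m / poch c m := by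
  rw [← cv_poly, Finset.sum_div]
  apply Finset.sum_congr rfl
  intro i hi
  have hi' : i ≤ m := by simpa [Nat.lt_succ_iff] using hi
  have e : poch c m = poch c i * poch (c+i) (m-i) := by
    rw [← poch_add]; congr 1; omega
  have h1 := poch_pos c i hc
  have h2 := poch_pos (c+i) (m-i) (by positivity)
  rw [e]
  field_simp

lemma poch_half (j : ℕ) : poch (j+1) j = 4^j * poch (1/2) j := by
  have h : ∀ j : ℕ, (j.factorial : ℚ) * (4^j * poch (1/2) j) = ((2*j).factorial : ℚ) := by
    intro j
    induction j with
    | zero => simp [poch_zero]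
    | succ j ih =>
      have : 2*(j+1) = (2*j+1)+1 := by ring
      rw [this, Nat.factorial_succ, Nat.factorial_succ, Nat.factorial_succ, poch_succ]
      push_cast
      rw [← ih]; ring
  have h1 : ∀ k : ℕ, poch 1 k = (k.factorial : ℚ) := by
    intro k
    induction k with
    | zero => simp [poch_zero]
    | succ k ih => rw [poch_succ, ih, Nat.factorial_succ]; push_cast; ring
  have h2 := poch_add 1 j j
  rw [h1, h1, ← two_mul, ← h j] at h2
  have h3 : (j.factorial : ℚ) ≠ 0 := by exact_mod_cast j.factorial_ne_zero
  rw [add_comm (j:ℚ) 1]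
  exact (mul_left_cancel₀ h3 h2).symm

lemma poch_dup (j : ℕ) : poch (5/4) (2*j) = 4^j * (poch (5/8) j * poch (9/8) j) := by
  induction j with
  | zero => simp [poch_zero]
  | succ j ih =>
    have : 2*(j+1) = (2*j+1)+1 := by ring
    rw [this, poch_succ, poch_succ, ih, poch_succ, poch_succ]
    push_cast; ring

lemma choose_eq (m i : ℕ) (h : i ≤ m) :
    (m.choose i : ℚ) = (m.factorial : ℚ) / ((i.factorial : ℚ) * ((m-i).factorial : ℚ)) :=
  Nat.cast_choose ℚ h

lemma factA (j : ℕ) : poch (1/2) j / ((j.factorial : ℚ) * poch (5/8) j * poch (9/8) j) =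
    ∑ r ∈ range (j+1), (-1)^r * poch (1/4) r /
      ((r.factorial : ℚ) * ((j-r).factorial : ℚ) * poch (5/4) (j+r)) := by
  have h := cv j (1/4) (5/4+j) (by positivity)
  have e : (5/4 + (j:ℚ) - 1/4) = j + 1 := by ring
  rw [e, poch_half] at h
  have hf : (j.factorial : ℚ) ≠ 0 := by exact_mod_cast j.factorial_ne_zero
  have h5 := poch_pos (5/4) j (by norm_num)
  have h5' := poch_pos (5/4+j) j (by positivity)
  have h8 := poch_pos (5/8) j (by norm_num)
  have h9 := poch_pos (9/8) j (by norm_num)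
  have hd := poch_dup j
  rw [two_mul, poch_add] at hd
  have lhs : poch (1/2) j / ((j.factorial : ℚ) * poch (5/8) j * poch (9/8) j) =
      (1 / ((j.factorial : ℚ) * poch (5/4) j)) * (4^j * poch (1/2) j / poch (5/4+j) j) := by
    rw [div_mul_div_comm, div_eq_div_iff (by positivity) (by positivity)]
    linear_combination (j.factorial : ℚ) * poch (1/2) j * hd
  rw [lhs, ← h, Finset.mul_sum]
  apply Finset.sum_congr rfl
  intro r hr
  have hr' : r ≤ j := by simpa [Nat.lt_succ_iff] using hr
  have hf1 : (r.factorial : ℚ) ≠ 0 := by exact_mod_cast r.factorial_ne_zero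
  have hf2 : ((j-r).factorial : ℚ) ≠ 0 := by exact_mod_cast (j-r).factorial_ne_zero
  have h6 := poch_pos (5/4+j) r (by positivity)
  rw [choose_eq _ _ hr', poch_add]
  field_simp

lemma poch_refl (n : ℕ) : poch (3/4 - n) n = (-1)^n * poch (1/4) n := by
  unfold poch
  rw [← Finset.prod_range_reflect]
  have : ((-1 : ℚ))^n = ∏ j ∈ range n, (-1) := by simp
  rw [this, ← Finset.prod_mul_distrib]
  apply Finset.prod_congr rfl
  intro i hi
  have hi' : i + 1 ≤ n := by simpa using hi
  have e : n - 1 - i = n - (i+1) := by omega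
  rw [e, Nat.cast_sub hi']
  push_cast; ring

lemma refl2 (n : ℕ) : (-1)^n * (4*n+1) * poch (3/4 - n) n = poch (5/4) n := by
  rw [poch_refl]
  have h1 := poch_succ (1/4) n
  rw [poch_succ'] at h1
  have e : (1/4 + 1 : ℚ) = 5/4 := by norm_num
  rw [e] at h1
  have h2 : ((-1 : ℚ))^n * (-1)^n = 1 := by rw [← mul_pow]; simp
  linear_combination (4*n+1) * poch (1/4) n * h2 - 4 * h1

lemma neg_poch (m i : ℕ) (h : i ≤ m) :
    poch (-(m:ℚ)) i = (-1)^i * (i.factorial : ℚ) * (m.choose i : ℚ) := by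
  rw [choose_eq _ _ h]
  have hf1 : (i.factorial : ℚ) ≠ 0 := by exact_mod_cast i.factorial_ne_zero
  have hf2 : ((m-i).factorial : ℚ) ≠ 0 := by exact_mod_cast (m-i).factorial_ne_zero
  field_simp
  induction i with
  | zero => simp [poch_zero]
  | succ i ih =>
    have := ih (by omega) (by exact_mod_cast i.factorial_ne_zero)
      (by exact_mod_cast (m-i).factorial_ne_zero)
    have e : m - i = (m - (i+1)) + 1 := by omega
    have e2 : ((m - (i+1) : ℕ) : ℚ) = m - (i+1) := by rw [Nat.cast_sub h]; push_cast; ring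
    rw [e, Nat.factorial_succ] at this
    push_cast at this
    rw [e2] at this
    rw [poch_succ, pow_succ]
    linear_combination -this

lemma q_ne (n j : ℕ) : (3/4 - (n:ℚ)) + j ≠ 0 := by
  intro h
  have : (3 + 4 * (j:ℤ) : ℤ) = 4 * n := by
    have : (3 + 4 * (j:ℚ) : ℚ) = 4 * n := by linear_combination 4 * h
    exact_mod_cast this
  omega

lemma factB (n r : ℕ) (hr : r ≤ n) :
    (-1)^n * (4*n+1) * ∑ i ∈ range (n-r+1), poch (-(n:ℚ)) (r+i) * poch (n+1/2) (r+i) /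
      ((i.factorial : ℚ) * poch (5/4) (r+i+r))
    = poch (-(n:ℚ)) r * poch (n+1/2) r / (poch (n+5/4) r * poch (3/4-n) r) := by
  obtain ⟨m, rfl⟩ := Nat.exists_eq_add_of_le hr
  have h := cv m (((r+m:ℕ):ℚ)+1/2+r) (5/4+(2*r:ℕ)) (by positivity)
  have e0 : r + m - r = m := by omega
  have e : (5/4+((2*r:ℕ):ℚ)) - (((r+m:ℕ):ℚ)+1/2+r) = 3/4 - ((r+m:ℕ):ℚ) + r := by
    push_cast; ring
  rw [e] at h
  rw [e0]
  set n : ℕ := r + m with hn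
  have hs : ∑ i ∈ range (m+1), poch (-(n:ℚ)) (r+i) * poch (n+1/2) (r+i) /
      ((i.factorial : ℚ) * poch (5/4) (r+i+r)) =
      poch (-(n:ℚ)) r * poch (n+1/2) r / poch (5/4) (2*r) *
      (poch (3/4 - (n:ℚ) + r) m / poch (5/4+(2*r:ℕ)) m) := by
    rw [← h, Finset.mul_sum]
    apply Finset.sum_congr rfl
    intro i hi
    have hi' : i ≤ m := by simpa [Nat.lt_succ_iff] using hi
    have e3 : r + i + r = 2*r + i := by ring
    have e4 : -(n:ℚ) + r = -(m:ℚ) := by rw [hn]; push_cast; ring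
    rw [e3, poch_add, poch_add, poch_add, e4, neg_poch m i hi']
    have hf1 : (i.factorial : ℚ) ≠ 0 := by exact_mod_cast i.factorial_ne_zero
    have h1 := poch_pos (5/4) (2*r) (by norm_num)
    have h2 := poch_pos (5/4+(2*r:ℕ)) i (by positivity)
    field_simp
  rw [hs]
  have k1 := refl2 n
  have k2 : poch (3/4-(n:ℚ)) n = poch (3/4-(n:ℚ)) r * poch (3/4-(n:ℚ)+r) m := by
    rw [← poch_add]
  have k3 : poch (5/4) (2*r) * poch (5/4+(2*r:ℕ)) m = poch (5/4) n * poch (n+5/4) r := by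
    rw [← poch_add, add_comm (n:ℚ), ← poch_add]; congr 1; omega
  have z1 := poch_pos (5/4) (2*r) (by norm_num)
  have z2 := poch_pos (5/4+(2*r:ℕ)) m (by positivity)
  have z3 := poch_pos (n+5/4) r (by positivity)
  have z4 := poch_ne (3/4-n) r (q_ne n)
  have z5 := poch_pos (5/4) n (by norm_num)
  rw [div_mul_div_comm, k3, ← mul_div_assoc, div_eq_div_iff (by positivity) (by positivity)]
  rw [k2] at k1
  linear_combination poch (-(n:ℚ)) r * poch (n+1/2) r * poch (n+5/4) r * k1

lemma exact_id (n : ℕ) :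
    ∑ r ∈ range (n+1), (-1)^r * poch (1/4) r * (poch (-(n:ℚ)) r * poch (n+1/2) r) /
      ((r.factorial : ℚ) * (poch (n+5/4) r * poch (3/4-n) r))
    = (-1)^n * (4*n+1) * ∑ j ∈ range (n+1), (poch (-(n:ℚ)) j * poch (n+1/2) j) * poch (1/2) j /
      ((j.factorial : ℚ) * poch (5/8) j * poch (9/8) j) := by
  have h1 : ∀ j, (poch (-(n:ℚ)) j * poch (n+1/2) j) * poch (1/2) j /
      ((j.factorial : ℚ) * poch (5/8) j * poch (9/8) j) =
      ∑ r ∈ range (j+1), (poch (-(n:ℚ)) j * poch (n+1/2) j) * ((-1)^r * poch (1/4) r /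
      ((r.factorial : ℚ) * ((j-r).factorial : ℚ) * poch (5/4) (j+r))) := by
    intro j
    rw [mul_div_assoc, factA, Finset.mul_sum]
  simp only [h1]
  have h2 : ∑ j ∈ range (n+1), ∑ r ∈ range (j+1),
      (poch (-(n:ℚ)) j * poch (n+1/2) j) * ((-1)^r * poch (1/4) r /
      ((r.factorial : ℚ) * ((j-r).factorial : ℚ) * poch (5/4) (j+r)))
      = ∑ r ∈ range (n+1), ∑ i ∈ range (n-r+1),
      (poch (-(n:ℚ)) (r+i) * poch (n+1/2) (r+i)) * ((-1)^r * poch (1/4) r /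
      ((r.factorial : ℚ) * (i.factorial : ℚ) * poch (5/4) (r+i+r))) := by
    rw [Finset.sum_sigma', Finset.sum_sigma']
    refine Finset.sum_bij' (fun x _ => ⟨x.2, x.1 - x.2⟩) (fun x _ => ⟨x.1 + x.2, x.1⟩) ?_ ?_ ?_ ?_ ?_
    · rintro ⟨j, r⟩ h; simp only [mem_sigma, mem_range] at h ⊢; omega
    · rintro ⟨j, r⟩ h; simp only [mem_sigma, mem_range] at h ⊢; omega
    · rintro ⟨j, r⟩ h
      simp only [mem_sigma, mem_range] at h
      have : r + (j - r) = j := by omega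
      simp [this]
    · rintro ⟨j, r⟩ h; simp
    · rintro ⟨j, r⟩ h
      simp only [mem_sigma, mem_range] at h
      have : r + (j - r) = j := by omega
      simp [this]
  rw [h2, Finset.mul_sum]
  apply Finset.sum_congr rfl
  intro r hr
  have hr' : r ≤ n := by simpa [Nat.lt_succ_iff] using hr
  have hb := factB n r hr'
  have h3 : (-1)^r * poch (1/4) r * (poch (-(n:ℚ)) r * poch (n+1/2) r) /
      ((r.factorial : ℚ) * (poch (n+5/4) r * poch (3/4-n) r)) =
      ((-1)^r * poch (1/4) r / (r.factorial : ℚ)) *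
      (poch (-(n:ℚ)) r * poch (n+1/2) r / (poch (n+5/4) r * poch (3/4-n) r)) := by
    rw [div_mul_div_comm]
  rw [h3, ← hb, mul_left_comm]
  congr 1
  rw [Finset.mul_sum]
  apply Finset.sum_congr rfl
  intro i _
  rw [div_mul_div_comm, ← mul_div_assoc]
  congr 1 <;> ring

section padic
variable {p : ℕ} [hp : Fact p.Prime]

lemma norm_mul_le_one' {a b : ℚ_[p]} (ha : ‖a‖ ≤ 1) (hb : ‖b‖ ≤ 1) : ‖a * b‖ ≤ 1 := by
  rw [norm_mul]; exact mul_le_one₀ ha (norm_nonneg _) hb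

lemma norm_poch_le (a : ℚ) (ha : ‖(a : ℚ_[p])‖ ≤ 1) (k : ℕ) :
    ‖((poch a k : ℚ) : ℚ_[p])‖ ≤ 1 := by
  induction k with
  | zero => simp [poch_zero]
  | succ k ih =>
    rw [poch_succ]
    push_cast
    refine norm_mul_le_one' ih ?_
    refine (Padic.nonarchimedean _ _).trans (max_le ha ?_)
    exact_mod_cast Padic.norm_int_le_one (p := p) (k : ℤ)

lemma norm_congr (a x : ℚ) (ha : ‖(a : ℚ_[p])‖ ≤ 1) (hx : ‖(x : ℚ_[p])‖ ≤ (p:ℝ)⁻¹) (k : ℕ) :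
    ‖((poch a k ^ 2 - poch (a-x) k * poch (a+x) k : ℚ) : ℚ_[p])‖ ≤ (p:ℝ)^(-2:ℤ) := by
  have hp1 : (p:ℝ)⁻¹ ≤ 1 := inv_le_one_of_one_le₀ (by exact_mod_cast hp.out.one_le)
  have hx1 := hx.trans hp1
  have hk : ∀ k : ℕ, ‖((k:ℚ) : ℚ_[p])‖ ≤ 1 := fun k => by
    exact_mod_cast Padic.norm_int_le_one (p := p) (k : ℤ)
  have hsub : ‖((a - x : ℚ) : ℚ_[p])‖ ≤ 1 := by
    push_cast
    rw [sub_eq_add_neg]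
    exact (Padic.nonarchimedean _ _).trans (max_le ha (by rwa [norm_neg]))
  have hadd : ‖((a + x : ℚ) : ℚ_[p])‖ ≤ 1 := by
    push_cast
    exact (Padic.nonarchimedean _ _).trans (max_le ha hx1)
  have hx2 : ‖((x : ℚ) : ℚ_[p]) ^ 2‖ ≤ (p:ℝ)^(-2:ℤ) := by
    rw [norm_pow, zpow_neg]
    calc _ ≤ ((p:ℝ)⁻¹)^2 := by gcongr
      _ = _ := by rw [inv_pow]; norm_cast
  have hp2 : (0:ℝ) ≤ (p:ℝ)^(-2:ℤ) := by positivity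
  induction k with
  | zero => simp [poch_zero]
  | succ k ih =>
    have e : poch a (k+1) ^ 2 - poch (a-x) (k+1) * poch (a+x) (k+1) =
        (poch a k ^ 2 - poch (a-x) k * poch (a+x) k) * (a + k)^2 +
        x^2 * (poch (a-x) k * poch (a+x) k) := by
      simp only [poch_succ]; ring
    rw [e, Rat.cast_add]
    refine (Padic.nonarchimedean _ _).trans (max_le ?_ ?_)
    · rw [Rat.cast_mul, norm_mul]
      have : ‖(((a + k)^2 : ℚ) : ℚ_[p])‖ ≤ 1 := by
        rw [Rat.cast_pow, norm_pow]
        refine pow_le_one₀ (norm_nonneg _) ?_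
        rw [Rat.cast_add]
        exact (Padic.nonarchimedean _ _).trans (max_le ha (hk k))
      calc _ ≤ (p:ℝ)^(-2:ℤ) * 1 := by gcongr
        _ = _ := mul_one _
    · rw [Rat.cast_mul, norm_mul]
      have : ‖((poch (a-x) k * poch (a+x) k : ℚ) : ℚ_[p])‖ ≤ 1 := by
        rw [Rat.cast_mul]
        exact norm_mul_le_one' (norm_poch_le _ hsub k) (norm_poch_le _ hadd k)
      calc _ ≤ (p:ℝ)^(-2:ℤ) * 1 := by
            refine mul_le_mul ?_ this (norm_nonneg _) hp2
            rw [Rat.cast_pow]; exact hx2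
        _ = _ := mul_one _

lemma norm_nat_eq_one (m : ℕ) (h : ¬ p ∣ m) : ‖(m : ℚ_[p])‖ = 1 := by
  rw [Padic.norm_natCast_eq_one_iff]
  exact (Nat.Prime.coprime_iff_not_dvd hp.out).mpr h

lemma poch_one (k : ℕ) : poch 1 k = (k.factorial : ℚ) := by
  induction k with
  | zero => simp [poch_zero]
  | succ k ih => rw [poch_succ, ih, Nat.factorial_succ]; push_cast; ring

lemma poch_scale (m : ℕ) : (4:ℚ)^m * poch (5/4) m = ∏ i ∈ range m, ((5 + 4*i : ℕ) : ℚ) := by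
  induction m with
  | zero => simp [poch_zero]
  | succ m ih => rw [Finset.prod_range_succ, ← ih, poch_succ]; push_cast; ring

/-- The denominators on the right are divisible by `p` at most once. -/
lemma norm_den (n k : ℕ) (hn : p = 4*n+1) (hk : k ≤ n) (h4 : ‖(4 : ℚ_[p])‖ = 1) :
    (p:ℝ)⁻¹ ≤ ‖((poch (5/8) k * poch (9/8) k : ℚ) : ℚ_[p])‖ := by
  have hp0 : (0:ℝ) < p := by exact_mod_cast hp.out.pos
  have hp1 : (p:ℝ)⁻¹ ≤ 1 := inv_le_one_of_one_le₀ (by exact_mod_cast hp.out.one_le)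
  have e1 : ‖((poch (5/8) k * poch (9/8) k : ℚ) : ℚ_[p])‖ =
      ‖((poch (5/4) (2*k) : ℚ) : ℚ_[p])‖ := by
    rw [poch_dup, Rat.cast_mul (4^k), norm_mul, Rat.cast_pow, norm_pow]
    have : ‖((4:ℚ) : ℚ_[p])‖ = 1 := by exact_mod_cast h4
    rw [this]; simp
  have e2 : ‖((poch (5/4) (2*k) : ℚ) : ℚ_[p])‖ =
      ∏ i ∈ range (2*k), ‖((5 + 4*i : ℕ) : ℚ_[p])‖ := by
    have h := congrArg (fun q : ℚ => ‖(q : ℚ_[p])‖) (poch_scale (2*k))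
    simp only [Rat.cast_mul, norm_mul, Rat.cast_pow, norm_pow, Rat.cast_prod,
      norm_prod, Rat.cast_natCast] at h
    have : ‖((4:ℚ) : ℚ_[p])‖ = 1 := by exact_mod_cast h4
    rw [this, one_pow, one_mul] at h
    exact h
  rw [e1, e2]
  calc (p:ℝ)⁻¹ ≤ ∏ i ∈ range (2*k), (if i = n-1 then (p:ℝ)⁻¹ else 1) := by
        rw [Finset.prod_ite_eq']
        split_ifs
        · exact le_rfl
        · exact hp1
    _ ≤ _ := by
        apply Finset.prod_le_prod
        · intro i _; split_ifs <;> positivity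
        · intro i hi
          have hi' : i < 2*k := by simpa using hi
          split_ifs with h
          · have : 5 + 4*i = p := by omega
            rw [this, Padic.norm_p]
          · rw [norm_nat_eq_one]
            rintro ⟨c, hc⟩
            have hc2 : c < 2 := by
              by_contra hcon
              have : p * 2 ≤ p * c := Nat.mul_le_mul_left p (by omega)
              omega
            interval_cases c <;> omega

end padic

theorem stmt14 (p : ℕ) [Fact p.Prime] (hp4 : p % 4 = 1) :
    ‖(((∑ k ∈ Finset.range ((p - 1) / 4 + 1),
          (-1 : ℚ) ^ k * poch (1/4) k ^ 3 / ((k.factorial : ℚ)) ^ 3) -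
        ((-1 : ℚ) ^ ((p - 1) / 4) * p *
          ∑ k ∈ Finset.range ((p - 1) / 4 + 1),
            poch (1/4) k ^ 2 * poch (1/2) k /
              ((k.factorial : ℚ) * poch (5/8) k * poch (9/8) k)) : ℚ) : ℚ_[p])‖ ≤
      (p : ℝ) ^ (-2 : ℤ) := by
  obtain ⟨n, hn⟩ : ∃ n, p = 4*n+1 := ⟨p/4, by omega⟩
  have hdiv : (p-1)/4 = n := by omega
  rw [hdiv]
  have hpr : p.Prime := Fact.out
  have hp0 : (0:ℝ) < p := by exact_mod_cast hpr.pos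
  have hp1 : (p:ℝ)⁻¹ ≤ 1 := inv_le_one_of_one_le₀ (by exact_mod_cast hpr.one_le)
  have hp2 : (0:ℝ) ≤ (p:ℝ)^(-2:ℤ) := by positivity
  have hp21 : (p:ℝ)^(-2:ℤ) < 1 := by
    apply zpow_lt_one_of_neg₀ (by exact_mod_cast hpr.one_lt) (by norm_num)
  have hn1 : 1 ≤ n := by
    rcases Nat.eq_zero_or_pos n with h | h
    · subst h; exact absurd hpr (by rw [hn]; norm_num)
    · exact h
  have hpn : (p:ℚ) = 4*n+1 := by exact_mod_cast hn
  have h4 : ‖(4 : ℚ_[p])‖ = 1 := by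
    have := norm_nat_eq_one (p := p) 4 (fun h => by have := Nat.le_of_dvd (by norm_num) h; omega)
    exact_mod_cast this
  have h2 : ‖(2 : ℚ_[p])‖ = 1 := by
    have := norm_nat_eq_one (p := p) 2 (fun h => by have := Nat.le_of_dvd (by norm_num) h; omega)
    exact_mod_cast this
  have hq : ‖((1/4 : ℚ) : ℚ_[p])‖ ≤ 1 := by push_cast; rw [norm_div, h4]; simp
  have hh : ‖((1/2 : ℚ) : ℚ_[p])‖ ≤ 1 := by push_cast; rw [norm_div, h2]; simp
  have hx : ‖((p/4 : ℚ) : ℚ_[p])‖ ≤ (p:ℝ)⁻¹ := by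
    push_cast; rw [norm_div, h4, Padic.norm_p]; simp
  have c1 : ∀ k, ‖((poch (1/4) k ^ 2 - poch (-(n:ℚ)) k * poch (n+1/2) k : ℚ) : ℚ_[p])‖
      ≤ (p:ℝ)^(-2:ℤ) := by
    intro k
    have h := norm_congr (p := p) (1/4) (p/4) hq hx k
    have e1 : (1/4 - (p:ℚ)/4) = -(n:ℚ) := by rw [hpn]; ring
    have e2 : (1/4 + (p:ℚ)/4) = (n:ℚ) + 1/2 := by rw [hpn]; ring
    rwa [e1, e2] at h
  have c2 : ∀ k, ‖(((k.factorial : ℚ) ^ 2 - poch (n+5/4) k * poch (3/4-n) k : ℚ) : ℚ_[p])‖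
      ≤ (p:ℝ)^(-2:ℤ) := by
    intro k
    have h := norm_congr (p := p) 1 (p/4) (by simp) hx k
    have e1 : (1 - (p:ℚ)/4) = 3/4 - (n:ℚ) := by rw [hpn]; ring
    have e2 : (1 + (p:ℚ)/4) = (n:ℚ) + 5/4 := by rw [hpn]; ring
    rwa [e1, e2, poch_one, mul_comm (poch (3/4 - (n:ℚ)) k)] at h
  have hBle : ∀ k, ‖((poch (-(n:ℚ)) k * poch (n+1/2) k : ℚ) : ℚ_[p])‖ ≤ 1 := by
    intro k
    have hnn : ‖((n:ℚ) : ℚ_[p])‖ ≤ 1 := by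
      exact_mod_cast Padic.norm_int_le_one (p := p) (n : ℤ)
    rw [Rat.cast_mul]
    refine norm_mul_le_one' (norm_poch_le _ ?_ k) (norm_poch_le _ ?_ k)
    · rw [Rat.cast_neg, norm_neg]; exact hnn
    · rw [Rat.cast_add]
      exact (Padic.nonarchimedean _ _).trans (max_le hnn hh)
  have hfac : ∀ k ≤ n, ‖((k.factorial : ℚ) : ℚ_[p])‖ = 1 := by
    intro k hk
    rw [Rat.cast_natCast]
    apply norm_nat_eq_one
    rw [hpr.dvd_factorial]
    omega
  -- use the exact identity
  have key := exact_id n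
  rw [← hpn] at key
  have split : ((∑ k ∈ Finset.range (n + 1),
          (-1 : ℚ) ^ k * poch (1/4) k ^ 3 / ((k.factorial : ℚ)) ^ 3) -
        ((-1 : ℚ) ^ n * p *
          ∑ k ∈ Finset.range (n + 1),
            poch (1/4) k ^ 2 * poch (1/2) k /
              ((k.factorial : ℚ) * poch (5/8) k * poch (9/8) k)) : ℚ)
      = ∑ k ∈ Finset.range (n+1),
        (((-1 : ℚ) ^ k * poch (1/4) k ^ 3 / ((k.factorial : ℚ)) ^ 3 -
        (-1)^k * poch (1/4) k * (poch (-(n:ℚ)) k * poch (n+1/2) k) /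
          ((k.factorial : ℚ) * (poch (n+5/4) k * poch (3/4-n) k)))
        + (-1 : ℚ) ^ n * p * ((poch (-(n:ℚ)) k * poch (n+1/2) k) * poch (1/2) k /
            ((k.factorial : ℚ) * poch (5/8) k * poch (9/8) k) -
          poch (1/4) k ^ 2 * poch (1/2) k /
              ((k.factorial : ℚ) * poch (5/8) k * poch (9/8) k))) := by
    rw [Finset.sum_add_distrib, Finset.sum_sub_distrib, key, ← Finset.mul_sum,
      Finset.sum_sub_distrib]
    ring
  rw [split, Rat.cast_sum]
  refine IsUltrametricDist.norm_sum_le_of_forall_le_of_nonneg hp2 ?_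
  intro k hk
  have hk' : k ≤ n := by simpa [Nat.lt_succ_iff] using hk
  have hF := hfac k hk'
  have hF0 : (k.factorial : ℚ) ≠ 0 := by exact_mod_cast k.factorial_ne_zero
  have d1 := c1 k
  have d2 := c2 k
  have d3 := hBle k
  have d4 := norm_poch_le (p := p) (1/4) hq k
  have d5 := norm_poch_le (p := p) (1/2) hh k
  have d6 := norm_den (p := p) n k hn hk' h4
  have hD0 : poch (n+5/4) k * poch (3/4-n) k ≠ 0 :=
    mul_ne_zero (poch_pos _ k (by positivity)) (poch_ne _ k (q_ne n))
  have hE0 : poch (5/8) k * poch (9/8) k ≠ 0 :=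
    mul_ne_zero (poch_pos _ k (by norm_num)) (poch_pos _ k (by norm_num))
  rw [mul_assoc (k.factorial : ℚ) (poch (5/8) k)]
  generalize poch (5/8) k * poch (9/8) k = E at *
  generalize poch (n+5/4) k * poch (3/4-n) k = D at *
  generalize poch (-(n:ℚ)) k * poch (n+1/2) k = B at *
  generalize poch (1/4) k = A at *
  generalize poch (1/2) k = H at *
  generalize (k.factorial : ℚ) = F at *
  have hD : ‖(D : ℚ_[p])‖ = 1 := by
    have e : (D : ℚ_[p]) = (F:ℚ_[p])^2 + (-((F^2 - D : ℚ) : ℚ_[p])) := by push_cast; ring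
    have hF2 : ‖(F:ℚ_[p])^2‖ = 1 := by rw [norm_pow, hF, one_pow]
    have hlt : ‖(-((F^2 - D : ℚ) : ℚ_[p]))‖ < 1 := by
      rw [norm_neg]; exact d2.trans_lt hp21
    rw [e, Padic.add_eq_max_of_ne (by rw [hF2]; exact hlt.ne'), hF2]
    exact max_eq_left hlt.le
  have hE0' : (E : ℚ_[p]) ≠ 0 := by exact_mod_cast hE0
  have s1 : (-1 : ℚ) ^ k * A ^ 3 / F ^ 3 - (-1)^k * A * B / (F * D) =
      ((-1)^k * A / (F^3 * D)) * ((A^2 - B) * D + -(B * (F^2 - D))) := by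
    field_simp
    ring
  have s2 : (-1 : ℚ) ^ n * p * (B * H / (F * E) - A^2 * H / (F * E)) =
      -(((-1)^n * H / F) * (p / E) * (A^2 - B)) := by
    field_simp
    ring
  rw [s1, s2, Rat.cast_add]
  refine (Padic.nonarchimedean _ _).trans (max_le ?_ ?_)
  · rw [Rat.cast_mul, norm_mul]
    have t1 : ‖(((-1)^k * A / (F^3 * D) : ℚ) : ℚ_[p])‖ ≤ 1 := by
      push_cast
      simp only [norm_div, norm_mul, norm_pow, hF, hD, norm_neg, norm_one]
      simpa using d4
    have t2 : ‖(((A^2 - B) * D + -(B * (F^2 - D)) : ℚ) : ℚ_[p])‖ ≤ (p:ℝ)^(-2:ℤ) := by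
      rw [Rat.cast_add]
      refine (Padic.nonarchimedean _ _).trans (max_le ?_ ?_)
      · rw [Rat.cast_mul, norm_mul, hD, mul_one]; exact d1
      · rw [Rat.cast_neg, norm_neg, Rat.cast_mul, norm_mul]
        calc _ ≤ 1 * (p:ℝ)^(-2:ℤ) := by gcongr
          _ = _ := one_mul _
    calc _ ≤ 1 * (p:ℝ)^(-2:ℤ) := by gcongr
      _ = _ := one_mul _
  · rw [Rat.cast_neg, norm_neg, Rat.cast_mul, norm_mul, Rat.cast_mul, norm_mul]
    have t1 : ‖(((-1)^n * H / F : ℚ) : ℚ_[p])‖ ≤ 1 := by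
      push_cast
      simp only [norm_div, norm_mul, norm_pow, hF, norm_neg, norm_one]
      simpa using d5
    have t2 : ‖((p / E : ℚ) : ℚ_[p])‖ ≤ 1 := by
      push_cast
      rw [norm_div, Padic.norm_p]
      exact div_le_one_of_le₀ d6 (norm_nonneg _)
    calc _ ≤ 1 * 1 * (p:ℝ)^(-2:ℤ) := by gcongr
      _ = _ := by ring
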